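/- arXiv:1505.00081 — 8 statements merged into one kernel-verified Lean document; each statement's English description precedes it below -/
import Mathlib

section
/- Let C > 0, let l = √2/2, and let k = ⌈2C/l + 1⌉. Suppose u, v ∈ ℝ² lie in grid cells cell(i,j) and cell(i',j') respectively, where i ≡ i' (mod k), j ≡ j' (mod k), and (i,j) ≠ (i',j'). Then the Euclidean distance between u and v is strictly greater than 2C. -/
/-- The half-open grid cell `[i·l, (i+1)·l) × [j·l, (j+1)·l)` in the Euclidean plane. -/
def cell (l : ℝ) (i j : ℤ) : Set (EuclideanSpace ℝ (Fin 2)) :=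
  {p | (i : ℝ) * l ≤ p 0 ∧ p 0 < ((i : ℝ) + 1) * l ∧
       (j : ℝ) * l ≤ p 1 ∧ p 1 < ((j : ℝ) + 1) * l}

/-!
Distinct cells of the same group have indices that differ by a nonzero multiple of `k` in some
coordinate, so in that coordinate their lower ends are at least `k * l` apart. Since the cells are
half-open of side `l`, any two of their points are more than `(k - 1) * l ≥ 2 * C` apart there, and
a coordinate difference is at most the Euclidean distance.
-/

open Set

theorem le_abs_sub_of_modEq_of_ne {k i i' : ℤ} (h : i ≡ i' [ZMOD k]) (hne : i ≠ i') :
    k ≤ |i - i'| :=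
  Int.le_of_dvd (abs_pos.mpr (sub_ne_zero.mpr hne)) ((dvd_abs _ _).mpr h.symm.dvd)

theorem abs_sub_sub_lt_abs_sub_of_mem_Ico {G : Type*} [AddCommGroup G] [LinearOrder G]
    [IsOrderedAddMonoid G] {a b l x y : G} (hx : x ∈ Ico a (a + l)) (hy : y ∈ Ico b (b + l)) :
    |a - b| - l < |x - y| := by
  have offset_lt : |(x - a) - (y - b)| < l :=
    abs_sub_lt_of_nonneg_of_lt (sub_nonneg.mpr hx.1) (sub_lt_iff_lt_add'.mpr hx.2)
      (sub_nonneg.mpr hy.1) (sub_lt_iff_lt_add'.mpr hy.2)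
  rw [sub_lt_iff_lt_add]
  calc |a - b| = |(x - y) - ((x - a) - (y - b))| := by congr 1; abel
    _ ≤ |x - y| + |(x - a) - (y - b)| := abs_sub _ _
    _ < |x - y| + l := by gcongr

theorem sub_one_mul_lt_abs_sub_of_modEq_of_ne {R : Type*} [CommRing R] [LinearOrder R]
    [IsStrictOrderedRing R] {k i i' : ℤ} {l x y : R} (hi : i ≡ i' [ZMOD k]) (hne : i ≠ i')
    (hx : x ∈ Ico (i * l) ((i + 1) * l)) (hy : y ∈ Ico (i' * l) ((i' + 1) * l)) :
    (k - 1) * l < |x - y| := by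
  have l_pos : 0 < l := by linarith [hx.1.trans_lt hx.2]
  have k_le : (k : R) ≤ |(i : R) - i'| := mod_cast le_abs_sub_of_modEq_of_ne hi hne
  rw [add_one_mul] at hx hy
  calc (k - 1) * l ≤ (|(i : R) - i'| - 1) * l := by gcongr
    _ = |i * l - i' * l| - l := by rw [← sub_mul, abs_mul, abs_of_pos l_pos, sub_one_mul]
    _ < |x - y| := abs_sub_sub_lt_abs_sub_of_mem_Ico hx hy

section Cell

variable {l : ℝ} {i j i' j' k : ℤ} {u v : EuclideanSpace ℝ (Fin 2)}

theorem mem_cell_iff :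
    u ∈ cell l i j ↔ u 0 ∈ Ico (i * l) ((i + 1) * l) ∧ u 1 ∈ Ico (j * l) ((j + 1) * l) :=
  and_assoc.symm

theorem pos_of_mem_cell (hu : u ∈ cell l i j) : 0 < l := by
  linarith [hu.1.trans_lt hu.2.1]

theorem sub_one_mul_lt_dist_of_mem_cell (hi : i ≡ i' [ZMOD k]) (hj : j ≡ j' [ZMOD k])
    (hne : (i, j) ≠ (i', j')) (hu : u ∈ cell l i j) (hv : v ∈ cell l i' j') :
    (k - 1) * l < dist u v := by
  rw [mem_cell_iff] at hu hv
  have hne_coord : i ≠ i' ∨ j ≠ j' := not_and_or.mp (Prod.mk_inj.not.mp hne)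
  rcases hne_coord with hne_i | hne_j
  · calc (k - 1) * l < |u 0 - v 0| := sub_one_mul_lt_abs_sub_of_modEq_of_ne hi hne_i hu.1 hv.1
      _ ≤ dist u v := PiLp.dist_apply_le u v 0
  · calc (k - 1) * l < |u 1 - v 1| := sub_one_mul_lt_abs_sub_of_modEq_of_ne hj hne_j hu.2 hv.2
      _ ≤ dist u v := PiLp.dist_apply_le u v 1

theorem stmt_0_general {C : ℝ} (hk : 2 * C / l + 1 ≤ k)
    (hi : i ≡ i' [ZMOD k]) (hj : j ≡ j' [ZMOD k]) (hne : (i, j) ≠ (i', j'))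
    (hu : u ∈ cell l i j) (hv : v ∈ cell l i' j') :
    2 * C < dist u v :=
  calc 2 * C ≤ (k - 1) * l := (div_le_iff₀ (pos_of_mem_cell hu)).mp (le_sub_iff_add_le.mpr hk)
    _ < dist u v := sub_one_mul_lt_dist_of_mem_cell hi hj hne hu hv

end Cell

theorem stmt_0 (C : ℝ) (hC : 0 < C) (l : ℝ) (hl : l = Real.sqrt 2 / 2)
    (k : ℤ) (hk : k = ⌈2 * C / l + 1⌉)
    (i j i' j' : ℤ) (hi : i ≡ i' [ZMOD k]) (hj : j ≡ j' [ZMOD k])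
    (hne : (i, j) ≠ (i', j'))
    (u v : EuclideanSpace ℝ (Fin 2))
    (hu : u ∈ cell l i j) (hv : v ∈ cell l i' j') :
    dist u v > 2 * C :=
  stmt_0_general (hk ▸ Int.le_ceil _) hi hj hne hu hv
end

section
/- Let C > 0, l = √2/2, and k = ⌈2C/l + 1⌉. Let cell(i,j) and cell(i',j') be two distinct grid cells in the same cell group (i.e., i ≡ i' (mod k), j ≡ j' (mod k), (i,j) ≠ (i',j')). Let S₁ be a finite set of points contained in cell(i,j) and S₂ a finite set of points contained in cell(i',j'), and let P be a finite set of points in ℝ² (the targets). Then no target p ∈ P satisfies both dist(p,u) ≤ C for some u ∈ S₁ and dist(p,v) ≤ C for some v ∈ S₂; consequently, the number of targets within distance C of some point of S₁ ∪ S₂ equals the number of targets within distance C of some point of S₁ plus the number of targets within distance C of some point of S₂. -/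
open scoped Classical

/-! Distinct cells of one group have, in some coordinate, indices that differ by at least `k`.
Between them lie at least `k - 1` full cells in that direction, so, the cells being half-open, their
points are strictly more than `(k - 1) * l ≥ 2 * C` apart. Closed balls of radius `C` about such
points are disjoint, hence no target is counted twice. -/

theorem le_abs_sub_of_int_modEq {k a b : ℤ} (hab : a ≡ b [ZMOD k]) (hne : a ≠ b) : k ≤ |a - b| :=
  Int.le_of_dvd (abs_pos.2 (sub_ne_zero.2 hne)) ((dvd_abs _ _).2 hab.symm.dvd)

theorem sub_one_mul_lt_abs_sub_of_mem_Ico {R : Type*} [CommRing R] [LinearOrder R]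
    [IsStrictOrderedRing R] {l a b x y : R} (hx : x ∈ Set.Ico (a * l) ((a + 1) * l))
    (hy : y ∈ Set.Ico (b * l) ((b + 1) * l)) : (|a - b| - 1) * l < |x - y| := by
  wlog hab : a ≤ b generalizing a b x y
  · rw [abs_sub_comm a b, abs_sub_comm x y]
    exact this hy hx (le_of_not_ge hab)
  calc (|a - b| - 1) * l = b * l - (a + 1) * l := by
        rw [abs_sub_comm, abs_of_nonneg (sub_nonneg.2 hab)]; ring
    _ < y - x := by linarith [hx.2, hy.1]
    _ ≤ |x - y| := abs_sub_comm x y ▸ le_abs_self (y - x)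

section GridCell

variable {ι : Type*} [Fintype ι] {q : ENNReal} [Fact (1 ≤ q)] {l : ℝ} {k : ℤ} {c c' : ι → ℤ}

/-- The half-open cube `∏ n, [c n · l, (c n + 1) · l)`: the analogue of `cell` in `ℝ^ι`. The space
carries the `ℓ^q` metric for an arbitrary `q ≥ 1`, since only the fact that coordinates are
1-Lipschitz matters; `q = 2` is the Euclidean case. -/
def gridCell (q : ENNReal) (l : ℝ) (c : ι → ℤ) : Set (PiLp q fun _ : ι => ℝ) :=
  {p | ∀ n, p n ∈ Set.Ico ((c n : ℝ) * l) (((c n : ℝ) + 1) * l)}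

theorem cell_eq_gridCell (l : ℝ) (i j : ℤ) : cell l i j = gridCell 2 l ![i, j] := by
  ext p
  simp [cell, gridCell, Fin.forall_fin_two, and_assoc]

theorem sub_one_mul_lt_dist_of_mem_gridCell (hl : 0 ≤ l) (hc : ∀ n, c n ≡ c' n [ZMOD k])
    (hne : c ≠ c') {u v : PiLp q fun _ : ι => ℝ} (hu : u ∈ gridCell q l c)
    (hv : v ∈ gridCell q l c') : ((k : ℝ) - 1) * l < dist u v := by
  obtain ⟨n, hn⟩ := Function.ne_iff.1 hne
  have index_gap : (k : ℝ) ≤ |(c n : ℝ) - c' n| := mod_cast le_abs_sub_of_int_modEq (hc n) hn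
  calc ((k : ℝ) - 1) * l ≤ (|(c n : ℝ) - c' n| - 1) * l := by gcongr
    _ < |u n - v n| := sub_one_mul_lt_abs_sub_of_mem_Ico (hu n) (hv n)
    _ ≤ dist u v := PiLp.dist_apply_le u v n

end GridCell

section Coverage

variable {X : Type*} [PseudoMetricSpace X] {C : ℝ} {S₁ S₂ : Set X}

theorem not_covered_by_both_of_two_mul_lt_dist (hsep : ∀ u ∈ S₁, ∀ v ∈ S₂, 2 * C < dist u v)
    (p : X) : ¬ ((∃ u ∈ S₁, dist p u ≤ C) ∧ ∃ v ∈ S₂, dist p v ≤ C) := by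
  rintro ⟨⟨u, hu, hpu⟩, v, hv, hpv⟩
  have balls_disjoint : Disjoint (Metric.closedBall u C) (Metric.closedBall v C) :=
    Metric.closedBall_disjoint_closedBall (two_mul C ▸ hsep u hu v hv)
  exact Set.disjoint_left.1 balls_disjoint hpu hpv

theorem card_covered_union_of_two_mul_lt_dist (hsep : ∀ u ∈ S₁, ∀ v ∈ S₂, 2 * C < dist u v)
    (P : Finset X) :
    (P.filter (fun p => ∃ w ∈ S₁ ∪ S₂, dist p w ≤ C)).card =
      (P.filter (fun p => ∃ u ∈ S₁, dist p u ≤ C)).card +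
      (P.filter (fun p => ∃ v ∈ S₂, dist p v ≤ C)).card := by
  simp only [Set.mem_union, or_and_right, exists_or, Finset.filter_or]
  exact Finset.card_union_of_disjoint <| Finset.disjoint_filter.2 fun p _ h₁ h₂ =>
    not_covered_by_both_of_two_mul_lt_dist hsep p ⟨h₁, h₂⟩

end Coverage

theorem stmt_1_general {ι : Type*} [Fintype ι] {q : ENNReal} [Fact (1 ≤ q)] {C l : ℝ} (hl : 0 < l)
    {k : ℤ} (hk : 2 * C / l + 1 ≤ k) {c c' : ι → ℤ} (hc : ∀ n, c n ≡ c' n [ZMOD k])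
    (hne : c ≠ c') {S₁ S₂ : Set (PiLp q fun _ : ι => ℝ)} (hS₁ : S₁ ⊆ gridCell q l c)
    (hS₂ : S₂ ⊆ gridCell q l c') (P : Finset (PiLp q fun _ : ι => ℝ)) :
    (¬ ∃ p ∈ P, (∃ u ∈ S₁, dist p u ≤ C) ∧ (∃ v ∈ S₂, dist p v ≤ C)) ∧
    (P.filter (fun p => ∃ w ∈ S₁ ∪ S₂, dist p w ≤ C)).card =
      (P.filter (fun p => ∃ u ∈ S₁, dist p u ≤ C)).card +
      (P.filter (fun p => ∃ v ∈ S₂, dist p v ≤ C)).card := by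
  have two_mul_le : 2 * C ≤ ((k : ℝ) - 1) * l := (div_le_iff₀ hl).1 (le_sub_iff_add_le.2 hk)
  have hsep : ∀ u ∈ S₁, ∀ v ∈ S₂, 2 * C < dist u v := fun u hu v hv =>
    two_mul_le.trans_lt (sub_one_mul_lt_dist_of_mem_gridCell hl.le hc hne (hS₁ hu) (hS₂ hv))
  exact ⟨fun ⟨p, _, hp⟩ => not_covered_by_both_of_two_mul_lt_dist hsep p hp,
    card_covered_union_of_two_mul_lt_dist hsep P⟩

theorem stmt_1 (C : ℝ) (hC : 0 < C) (l : ℝ) (hl : l = Real.sqrt 2 / 2)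
    (k : ℤ) (hk : k = ⌈2 * C / l + 1⌉)
    (i j i' j' : ℤ) (hi : i ≡ i' [ZMOD k]) (hj : j ≡ j' [ZMOD k])
    (hne : (i, j) ≠ (i', j'))
    (S₁ S₂ P : Finset (EuclideanSpace ℝ (Fin 2)))
    (hS₁ : ∀ u ∈ S₁, u ∈ cell l i j) (hS₂ : ∀ v ∈ S₂, v ∈ cell l i' j') :
    (¬ ∃ p ∈ P, (∃ u ∈ S₁, dist p u ≤ C) ∧ (∃ v ∈ S₂, dist p v ≤ C)) ∧
    (P.filter (fun p => ∃ w ∈ S₁ ∪ S₂, dist p w ≤ C)).card =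
      (P.filter (fun p => ∃ u ∈ S₁, dist p u ≤ C)).card +
      (P.filter (fun p => ∃ v ∈ S₂, dist p v ≤ C)).card := by
  simp only [cell_eq_gridCell] at hS₁ hS₂
  exact mod_cast stmt_1_general (by rw [hl]; positivity) (hk ▸ Int.le_ceil _)
    (Fin.forall_fin_two.2 ⟨hi, hj⟩) (by simpa using hne) hS₁ hS₂ P
end

section
/- Let U be a finite set, ι a finite index set, and f : ι → Finset U. Let g : ℕ → ι be a greedy sequence, i.e., for every t, the element g(t) maximizes the number of newly covered elements: |f(g t) \ ⋃_{s<t} f(g s)| ≥ |f(v) \ ⋃_{s<t} f(g s)| for every v ∈ ι. Then for every positive integer B and every S ⊆ ι with |S| ≤ B, the coverage of the first B greedy picks satisfies |⋃_{t<B} f(g t)| ≥ (1 − 1/e) · |⋃_{v∈S} f v|. -/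
/-!
If `C` is the set covered so far, the at most `k` members of `S` together cover the
`|⋃ v ∈ S, f v| - |C|` elements still missing, so one of them, and hence the greedy pick, covers at
least a `1 / k` fraction of these. Each pick therefore shrinks the deficit by a factor `1 - 1 / k`,
and after `n` picks at most a fraction `(1 - 1 / k) ^ n ≤ exp (-n / k)` of the optimum is missing.
-/

section GreedyCoverage

variable {U ι : Type*} [DecidableEq U]

/-- The set covered by the first `n` picks `g 0, …, g (n - 1)`. -/
def coveredBy (f : ι → Finset U) (g : ℕ → ι) (n : ℕ) : Finset U :=
  (Finset.range n).biUnion fun t => f (g t)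

/-- The first `n` picks of `g` are greedy for coverage: each of them maximizes the number of newly
covered elements. The later values of `g` are arbitrary, so this also describes finite runs. -/
def IsGreedyUpTo (f : ι → Finset U) (g : ℕ → ι) (n : ℕ) : Prop :=
  ∀ t < n, ∀ v, (f v \ coveredBy f g t).card ≤ (f (g t) \ coveredBy f g t).card

theorem card_coveredBy_succ (f : ι → Finset U) (g : ℕ → ι) (t : ℕ) :
    (coveredBy f g (t + 1)).card =
      (coveredBy f g t).card + (f (g t) \ coveredBy f g t).card := by
  have coveredBy_succ : coveredBy f g (t + 1) = f (g t) ∪ coveredBy f g t := by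
    rw [coveredBy, Finset.range_add_one, Finset.biUnion_insert, coveredBy]
  rw [coveredBy_succ, ← Finset.card_sdiff_add_card, add_comm]

theorem card_biUnion_le_card_add_card_mul (f : ι → Finset U) (S : Finset ι) (C : Finset U) {m : ℕ}
    (hm : ∀ v ∈ S, (f v \ C).card ≤ m) :
    (S.biUnion f).card ≤ C.card + S.card * m := by
  have sdiff_subset : S.biUnion f \ C ⊆ S.biUnion fun v => f v \ C := by
    intro x
    simp only [Finset.mem_sdiff, Finset.mem_biUnion]
    rintro ⟨⟨v, hv, hxv⟩, hxC⟩
    exact ⟨v, hv, hxv, hxC⟩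
  calc (S.biUnion f).card
      ≤ (S.biUnion f \ C).card + C.card := by
        rw [Finset.card_sdiff_add_card]
        exact Finset.card_le_card Finset.subset_union_left
    _ ≤ S.card * m + C.card := by
        gcongr
        exact (Finset.card_le_card sdiff_subset).trans (Finset.card_biUnion_le_card_mul _ _ _ hm)
    _ = C.card + S.card * m := add_comm _ _

theorem IsGreedyUpTo.deficit_succ_le {f : ι → Finset U} {g : ℕ → ι} {n : ℕ}
    (hg : IsGreedyUpTo f g n) {k : ℕ} (hk : 0 < k) {S : Finset ι} (hS : S.card ≤ k)
    {t : ℕ} (ht : t < n) :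
    ((S.biUnion f).card : ℝ) - (coveredBy f g (t + 1)).card ≤
      (1 - 1 / k) * ((S.biUnion f).card - (coveredBy f g t).card) := by
  set gain := (f (g t) \ coveredBy f g t).card with gain_def
  have deficit_le : ((S.biUnion f).card : ℝ) - (coveredBy f g t).card ≤ gain * k := by
    have card_le : (S.biUnion f).card ≤ (coveredBy f g t).card + k * gain :=
      (card_biUnion_le_card_add_card_mul f S _ fun v _ => hg t ht v).trans (by gcongr)
    rw [sub_le_iff_le_add', mul_comm]
    exact_mod_cast card_le
  have deficit_div_le : (((S.biUnion f).card : ℝ) - (coveredBy f g t).card) / k ≤ gain :=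
    (div_le_iff₀ (Nat.cast_pos.2 hk)).2 deficit_le
  rw [card_coveredBy_succ, ← gain_def, Nat.cast_add, one_sub_mul, one_div_mul_eq_div]
  linarith

theorem IsGreedyUpTo.deficit_le {f : ι → Finset U} {g : ℕ → ι} {n : ℕ}
    (hg : IsGreedyUpTo f g n) {k : ℕ} (hk : 0 < k) {S : Finset ι} (hS : S.card ≤ k) :
    ((S.biUnion f).card : ℝ) - (coveredBy f g n).card ≤
      (1 - 1 / k) ^ n * (S.biUnion f).card := by
  have ratio_nonneg : (0 : ℝ) ≤ 1 - 1 / k := Nat.one_sub_one_div_cast_nonneg k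
  simpa [coveredBy] using
    le_geom (u := fun t => ((S.biUnion f).card : ℝ) - (coveredBy f g t).card) ratio_nonneg n
      fun t ht => hg.deficit_succ_le hk hS ht

end GreedyCoverage

theorem one_sub_pow_le_exp_neg_mul {x : ℝ} (hx : x ≤ 1) (n : ℕ) :
    (1 - x) ^ n ≤ Real.exp (-(n * x)) :=
  calc (1 - x) ^ n ≤ Real.exp (-x) ^ n :=
        pow_le_pow_left₀ (sub_nonneg.2 hx) (Real.one_sub_le_exp_neg x) n
    _ = Real.exp (-(n * x)) := by rw [← Real.exp_nat_mul, mul_neg]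

theorem stmt_2_general {U ι : Type*} [DecidableEq U] {f : ι → Finset U} {g : ℕ → ι} {n : ℕ}
    (hg : IsGreedyUpTo f g n) {k : ℕ} (hk : 0 < k) {S : Finset ι} (hS : S.card ≤ k) :
    (1 - Real.exp (-(n / k))) * ((S.biUnion f).card : ℝ) ≤ (coveredBy f g n).card := by
  have ratio_pow_le : (1 - 1 / (k : ℝ)) ^ n ≤ Real.exp (-(n / k)) := by
    simpa only [mul_one_div] using
      one_sub_pow_le_exp_neg_mul (sub_nonneg.1 (Nat.one_sub_one_div_cast_nonneg k)) n
  have deficit_le := calc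
    ((S.biUnion f).card : ℝ) - (coveredBy f g n).card
      ≤ (1 - 1 / k) ^ n * (S.biUnion f).card := hg.deficit_le hk hS
    _ ≤ Real.exp (-(n / k)) * (S.biUnion f).card := by gcongr
  linarith

theorem stmt_2 {U ι : Type*} [Fintype U] [DecidableEq U] [Fintype ι]
    (f : ι → Finset U) (g : ℕ → ι)
    (hgreedy : ∀ t : ℕ, ∀ v : ι,
      ((f v) \ (Finset.range t).biUnion (fun s => f (g s))).card ≤
      ((f (g t)) \ (Finset.range t).biUnion (fun s => f (g s))).card)
    (B : ℕ) (hB : 0 < B) (S : Finset ι) (hS : S.card ≤ B) :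
    (((Finset.range B).biUnion (fun t => f (g t))).card : ℝ) ≥
      (1 - 1 / Real.exp 1) * ((S.biUnion f).card : ℝ) := by
  have hg : IsGreedyUpTo f g B := fun t _ => hgreedy t
  simpa [hB.ne', Real.exp_neg, coveredBy] using stmt_2_general hg hB hS
end

section
/- Let U be a finite set, ι a finite index set, and f : ι → Finset U. Let g : ℕ → ι be a greedy sequence, i.e., for every t, |f(g t) \ ⋃_{s<t} f(g s)| ≥ |f(v) \ ⋃_{s<t} f(g s)| for every v ∈ ι. Let B be a positive integer and let OPT_B = max over S ⊆ ι with |S| ≤ B of |⋃_{v∈S} f v|. Then for every t ≥ 0, the coverage of the first t greedy picks satisfies |⋃_{s<t} f(g s)| ≥ (1 − (1 − 1/B)^t) · OPT_B. -/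
/-!
Among the at most `B` sets of an optimal choice, some set covers at least a `1 / B` fraction of the
part of the optimum still uncovered, and the greedy pick covers at least as many new elements.
Hence each step shrinks the gap to the optimum by a factor `1 - 1 / B`.
-/

open Finset

section Coverage

variable {U ι : Type*} [DecidableEq U]

theorem card_biUnion_range_succ (A : ℕ → Finset U) (t : ℕ) :
    #((range (t + 1)).biUnion A) =
      #((range t).biUnion A) + #(A t \ (range t).biUnion A) := by
  rw [range_add_one, biUnion_insert, ← card_sdiff_add_card, add_comm]

theorem card_biUnion_le_card_add_mul {S : Finset ι} {f : ι → Finset U} {C : Finset U} {B d : ℕ}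
    (hS : #S ≤ B) (hd : ∀ v ∈ S, #(f v \ C) ≤ d) :
    #(S.biUnion f) ≤ #C + B * d := by
  have new_eq : S.biUnion f \ C = S.biUnion fun v => f v \ C := by
    ext x
    simp only [mem_sdiff, mem_biUnion]
    tauto
  calc #(S.biUnion f)
      ≤ #(S.biUnion f \ C) + #C := card_le_card_sdiff_add_card
    _ = #C + #(S.biUnion fun v => f v \ C) := by rw [new_eq, add_comm]
    _ ≤ #C + #S * d := by gcongr; exact card_biUnion_le_card_mul _ _ _ hd
    _ ≤ #C + B * d := by gcongr

end Coverage

theorem sub_add_le_one_sub_one_div_mul_sub {K : Type*} [Field K] [LinearOrder K]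
    [IsStrictOrderedRing K] {b c d m : K} (hb : 0 < b) (h : m ≤ c + b * d) :
    m - (c + d) ≤ (1 - 1 / b) * (m - c) := by
  have gap_div_le : (m - c) / b ≤ d := by
    rw [div_le_iff₀' hb]
    linarith
  calc m - (c + d) ≤ (m - c) - (m - c) / b := by linarith
    _ = (1 - 1 / b) * (m - c) := by ring

theorem stmt_3_general {U ι : Type*} [DecidableEq U] {f : ι → Finset U} {g : ℕ → ι}
    {S : Finset ι} {B t : ℕ}
    (hgreedy : ∀ s < t, ∀ v ∈ S,
      #(f v \ (range s).biUnion fun r => f (g r)) ≤ #(f (g s) \ (range s).biUnion fun r => f (g r)))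
    (hB : 0 < B) (hS : #S ≤ B) :
    (1 - (1 - 1 / (B : ℝ)) ^ t) * (#(S.biUnion f) : ℝ) ≤
      (#((range t).biUnion fun s => f (g s)) : ℝ) := by
  let gap : ℕ → ℝ := fun s => #(S.biUnion f) - #((range s).biUnion fun r => f (g r))
  have ratio_nonneg : 0 ≤ 1 - 1 / (B : ℝ) :=
    sub_nonneg.2 (div_le_self zero_le_one (Nat.one_le_cast.2 hB))
  have gap_succ_le : ∀ s < t, gap (s + 1) ≤ (1 - 1 / (B : ℝ)) * gap s := by
    intro s hs
    simp only [gap, card_biUnion_range_succ, Nat.cast_add]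
    exact sub_add_le_one_sub_one_div_mul_sub (Nat.cast_pos.2 hB)
      (mod_cast card_biUnion_le_card_add_mul hS (hgreedy s hs))
  have gap_le : gap t ≤ (1 - 1 / (B : ℝ)) ^ t * gap 0 := le_geom ratio_nonneg t gap_succ_le
  simp only [gap, range_zero, biUnion_empty, card_empty, Nat.cast_zero, sub_zero] at gap_le
  linarith

theorem stmt_3 {U ι : Type*} [Fintype U] [DecidableEq U] [Fintype ι] [DecidableEq ι]
    (f : ι → Finset U) (g : ℕ → ι)
    (hgreedy : ∀ t : ℕ, ∀ v : ι,
      ((f v) \ (Finset.range t).biUnion (fun s => f (g s))).card ≤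
      ((f (g t)) \ (Finset.range t).biUnion (fun s => f (g s))).card)
    (B : ℕ) (hB : 0 < B) (OPT : ℕ)
    (hOPT : OPT = ((Finset.univ : Finset ι).powerset.filter (fun S => S.card ≤ B)).sup
      (fun S => (S.biUnion f).card))
    (t : ℕ) :
    (((Finset.range t).biUnion (fun s => f (g s))).card : ℝ) ≥
      (1 - (1 - 1 / (B : ℝ)) ^ t) * (OPT : ℝ) := by
  obtain ⟨S, hS, hmax⟩ := exists_mem_eq_sup
    ((Finset.univ : Finset ι).powerset.filter fun S => S.card ≤ B) ⟨∅, by simp⟩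
    fun S => (S.biUnion f).card
  rw [hOPT, hmax]
  exact stmt_3_general (fun s _ v _ => hgreedy s v) hB (mem_filter.1 hS).2
end

section
/- Let U be a finite set, let f : Fin n → Finset U be a family of finite sets, and for each j ∈ Fin n define the marginal profit m_j = |f(j) \ ⋃_{j'<j} f(j')| (the number of elements of f(j) not contained in any earlier set). Then for every subset S ⊆ Fin n, the sum of marginal profits over S is at most the coverage of S: Σ_{j∈S} m_j ≤ |⋃_{j∈S} f(j)|. -/
theorem sum_card_le_card_biUnion_of_pairwiseDisjoint {ι U : Type*} [DecidableEq U]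
    {S : Finset ι} {t f : ι → Finset U} (hdisj : (S : Set ι).PairwiseDisjoint t)
    (hsub : ∀ j ∈ S, t j ⊆ f j) :
    ∑ j ∈ S, (t j).card ≤ (S.biUnion f).card :=
  calc ∑ j ∈ S, (t j).card
    _ = (S.biUnion t).card := (Finset.card_biUnion hdisj).symm
    _ ≤ (S.biUnion f).card := Finset.card_le_card (Finset.biUnion_mono hsub)

theorem sdiff_biUnion_Iio_eq_disjointed {ι U : Type*} [DecidableEq U] [Preorder ι]
    [LocallyFiniteOrderBot ι] (f : ι → Finset U) (j : ι) :
    f j \ (Finset.Iio j).biUnion f = disjointed f j := by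
  rw [disjointed_apply, Finset.sup_eq_biUnion]

theorem stmt_4_general {ι U : Type*} [DecidableEq U] [LinearOrder ι] [LocallyFiniteOrderBot ι]
    (f : ι → Finset U) (m : ι → ℕ)
    (hm : ∀ j : ι, m j = (f j \ (Finset.Iio j).biUnion f).card) (S : Finset ι) :
    ∑ j ∈ S, m j ≤ (S.biUnion f).card := by
  simp only [hm, sdiff_biUnion_Iio_eq_disjointed]
  exact sum_card_le_card_biUnion_of_pairwiseDisjoint
    ((disjoint_disjointed f).set_pairwise _) fun j _ ↦ disjointed_le f j

theorem stmt_4 {U : Type*} [DecidableEq U] {n : ℕ} (f : Fin n → Finset U)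
    (m : Fin n → ℕ)
    (hm : ∀ j : Fin n, m j = ((f j) \ (Finset.Iio j).biUnion f).card)
    (S : Finset (Fin n)) :
    ∑ j ∈ S, m j ≤ (S.biUnion f).card :=
  stmt_4_general f m hm S
end

section
/- Let P (targets) and V (sensors) be nonempty finite sets and C ≥ 1 a real number. Suppose given: nonnegative reals x : V × V → ℝ; for each p ∈ P, nonnegative reals x^p : V × V → ℝ and y^p : V → ℝ; for each p ∈ P, subsets S_p ⊆ gp(p) ⊆ V. Assume: (a) x^p(u,v) ≤ x(u,v) for all p, u, v; (b) y^p(u) ≤ Σ_{w∈V} x^p(w,u) for all p and u; (c) Σ_{u∈S_p} y^p(u) ≥ 1/C² for every p ∈ P. Then there exists z : V → ℝ with 0 ≤ z(u) ≤ 1 for all u, Σ_{u ∈ gp(p)} z(u) ≥ 1 for every p ∈ P, and Σ_{u∈V} z(u) ≤ C² · Σ_{(u,v) ∈ V×V} x(u,v). -/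
/-!
Every `y^p(u)` is at most the total capacity `∑ w, x (w, u)` entering `u`, a bound that does not
depend on `p`. So `z(u) = min 1 (C² * ∑ w, x (w, u))` can replace `min 1 (C² * max_p y^p(u))`: its
cost is at most `C²` times the total capacity, since each edge enters exactly one vertex.
It covers every group because truncation `t ↦ min 1 t` is subadditive on nonnegative values.
-/

theorem min_sum_le_sum_min {ι M : Type*} [AddCommMonoid M] [LinearOrder M] [IsOrderedAddMonoid M]
    {s : Finset ι} {f : ι → M} {a : M} (ha : 0 ≤ a) (hf : ∀ i ∈ s, 0 ≤ f i) :
    min a (∑ i ∈ s, f i) ≤ ∑ i ∈ s, min a (f i) := by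
  by_cases hlarge : ∃ i ∈ s, a ≤ f i
  · obtain ⟨i, hi, hai⟩ := hlarge
    calc min a (∑ i ∈ s, f i) ≤ a := min_le_left _ _
      _ = min a (f i) := (min_eq_left hai).symm
      _ ≤ ∑ i ∈ s, min a (f i) :=
        Finset.single_le_sum (f := fun i => min a (f i)) (fun j hj => le_min ha (hf j hj)) hi
  · push Not at hlarge
    calc min a (∑ i ∈ s, f i) ≤ ∑ i ∈ s, f i := min_le_right _ _
      _ = ∑ i ∈ s, min a (f i) :=
        Finset.sum_congr rfl fun i hi => (min_eq_right (hlarge i hi).le).symm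

section Inflow

variable {V M : Type*} [Fintype V] [AddCommMonoid M]

/-- The total weight of the edges entering `u`, where `x (w, u)` is the weight of the directed edge
from `w` to `u`. -/
def inflow (x : V × V → M) (u : V) : M :=
  ∑ w, x (w, u)

theorem sum_inflow (x : V × V → M) : ∑ u, inflow x u = ∑ uv, x uv :=
  (Fintype.sum_prod_type_right x).symm

variable [Preorder M] [IsOrderedAddMonoid M]

theorem inflow_nonneg {x : V × V → M} (hx : ∀ uv, 0 ≤ x uv) (u : V) : 0 ≤ inflow x u :=
  Finset.sum_nonneg fun w _ => hx (w, u)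

theorem inflow_mono {x x' : V × V → M} (h : ∀ uv, x uv ≤ x' uv) (u : V) :
    inflow x u ≤ inflow x' u :=
  Finset.sum_le_sum fun w _ => h (w, u)

end Inflow

section CappedInflow

variable {V R : Type*} [Fintype V] [Semiring R] [LinearOrder R]

/-- The inflow scaled by `c` and truncated at `1`: the fractional hitting set obtained from the edge
capacities `x`. -/
def cappedInflow (c : R) (x : V × V → R) (u : V) : R :=
  min 1 (c * inflow x u)

variable {c : R} {x : V × V → R}

theorem cappedInflow_le_one (u : V) : cappedInflow c x u ≤ 1 :=
  min_le_left _ _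

variable [IsOrderedRing R]

theorem cappedInflow_nonneg (hc : 0 ≤ c) (hx : ∀ uv, 0 ≤ x uv) (u : V) :
    0 ≤ cappedInflow c x u :=
  le_min zero_le_one (mul_nonneg hc (inflow_nonneg hx u))

theorem sum_cappedInflow_le : ∑ u, cappedInflow c x u ≤ c * ∑ uv, x uv :=
  calc ∑ u, cappedInflow c x u ≤ ∑ u, c * inflow x u :=
        Finset.sum_le_sum fun _ _ => min_le_right _ _
    _ = c * ∑ uv, x uv := by rw [← Finset.mul_sum, sum_inflow]

theorem one_le_sum_cappedInflow (hc : 0 ≤ c) (hx : ∀ uv, 0 ≤ x uv) {s : Finset V} {y : V → R}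
    (hy : ∀ u ∈ s, y u ≤ inflow x u) (hcover : 1 ≤ c * ∑ u ∈ s, y u) :
    1 ≤ ∑ u ∈ s, cappedInflow c x u := by
  have hinflow : 1 ≤ ∑ u ∈ s, c * inflow x u :=
    calc 1 ≤ c * ∑ u ∈ s, y u := hcover
      _ ≤ c * ∑ u ∈ s, inflow x u := mul_le_mul_of_nonneg_left (Finset.sum_le_sum hy) hc
      _ = ∑ u ∈ s, c * inflow x u := Finset.mul_sum _ _ _
  calc 1 = min 1 (∑ u ∈ s, c * inflow x u) := (min_eq_left hinflow).symm
    _ ≤ ∑ u ∈ s, cappedInflow c x u :=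
      min_sum_le_sum_min zero_le_one fun u _ => mul_nonneg hc (inflow_nonneg hx u)

end CappedInflow

theorem stmt_10_general {P V R : Type*} [Fintype V] [Semiring R] [LinearOrder R] [IsOrderedRing R]
    {c : R} (hc : 0 ≤ c) {x : V × V → R} (hx : ∀ uv, 0 ≤ x uv)
    {xp : P → V × V → R} {yp : P → V → R} {gp S : P → Finset V} (hSgp : ∀ p, S p ⊆ gp p)
    (hcap : ∀ p uv, xp p uv ≤ x uv)
    (hflow : ∀ p, ∀ u ∈ S p, yp p u ≤ ∑ w, xp p (w, u))
    (hcover : ∀ p, 1 ≤ c * ∑ u ∈ S p, yp p u) :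
    ∃ z : V → R,
      (∀ u, 0 ≤ z u ∧ z u ≤ 1) ∧
      (∀ p, 1 ≤ ∑ u ∈ gp p, z u) ∧
      ∑ u, z u ≤ c * ∑ uv, x uv := by
  have hnonneg := cappedInflow_nonneg hc hx
  refine ⟨cappedInflow c x, fun u => ⟨hnonneg u, cappedInflow_le_one u⟩, fun p => ?_,
    sum_cappedInflow_le⟩
  have hy : ∀ u ∈ S p, yp p u ≤ inflow x u := fun u hu =>
    (hflow p u hu).trans (inflow_mono (hcap p) u)
  calc 1 ≤ ∑ u ∈ S p, cappedInflow c x u := one_le_sum_cappedInflow hc hx hy (hcover p)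
    _ ≤ ∑ u ∈ gp p, cappedInflow c x u :=
      Finset.sum_le_sum_of_subset_of_nonneg (hSgp p) fun u _ _ => hnonneg u

theorem stmt_10 {P V : Type*} [Fintype P] [Fintype V] [Nonempty P] [Nonempty V]
    [DecidableEq V]
    (C : ℝ) (hC : 1 ≤ C)
    (x : V × V → ℝ) (hx : ∀ uv, 0 ≤ x uv)
    (xp : P → V × V → ℝ) (hxp : ∀ p uv, 0 ≤ xp p uv)
    (yp : P → V → ℝ) (hyp : ∀ p u, 0 ≤ yp p u)
    (gp : P → Finset V) (S : P → Finset V) (hSgp : ∀ p, S p ⊆ gp p)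
    (ha : ∀ p uv, xp p uv ≤ x uv)
    (hb : ∀ p u, yp p u ≤ ∑ w : V, xp p (w, u))
    (hc : ∀ p, 1 / C ^ 2 ≤ ∑ u ∈ S p, yp p u) :
    ∃ z : V → ℝ,
      (∀ u, 0 ≤ z u ∧ z u ≤ 1) ∧
      (∀ p, 1 ≤ ∑ u ∈ gp p, z u) ∧
      ∑ u : V, z u ≤ C ^ 2 * ∑ uv : V × V, x uv :=
  stmt_10_general (sq_nonneg C) hx hSgp ha (fun p u _ => hb p u)
    fun p => (div_le_iff₀' (by positivity)).1 (hc p)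
end

section
/- Let T be a finite tree (a connected acyclic simple graph) on n ≥ 2 vertices. Then there exist vertex subsets S₁ and S₂ with S₁ ∪ S₂ = V(T) and |S₁ ∩ S₂| = 1, such that the subgraphs of T induced on S₁ and on S₂ are both connected, min(|S₁|, |S₂|) ≤ ⌈n/2⌉, and max(|S₁|, |S₂|) ≤ ⌈2n/3⌉. -/
/-!
Among all covers of the vertices by two connected sets `S` and `R` that share a single vertex `v`,
choose one whose larger part `S` is as small as possible. Suppose `2 * |R| < |S|`. If `S \ {v}` is
connected, move the cut vertex to a neighbour of `v` in `S`. Otherwise `S \ {v}` falls apart into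
two nonempty sets with no edge between them, each connected through `v`, and the smaller one can be
handed over to `R`. Both moves make the larger part smaller, so at the optimum `|S| ≤ 2 * |R|`;
together with `|S| + |R| = n + 1` this is the bound.
-/

open SimpleGraph

section InducedConnectivity

variable {V : Type*} {G : SimpleGraph V} {s t : Set V} {v : V}

lemma connected_induce_iff_forall_ssubset_exists_adj (hv : v ∈ s) :
    (G.induce s).Connected ↔ ∀ t ⊂ s, v ∈ t → ∃ a ∈ t, ∃ b ∈ s \ t, G.Adj a b := by
  constructor
  · intro hs t hts hvt
    obtain ⟨w, hws, hwt⟩ := Set.exists_of_ssubset hts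
    obtain ⟨p⟩ := hs.preconnected ⟨v, hv⟩ ⟨w, hws⟩
    obtain ⟨d, -, hfst, hsnd⟩ := p.exists_boundary_dart (Subtype.val ⁻¹' t) hvt hwt
    exact ⟨d.fst, hfst, d.snd, ⟨d.snd.2, hsnd⟩, d.adj⟩
  · intro hcut
    let reached : Set V := {x | ∃ hx : x ∈ s, (G.induce s).Reachable ⟨v, hv⟩ ⟨x, hx⟩}
    have hreached : reached = s := by
      by_contra hne
      have hsub : reached ⊆ s := fun _ hx ↦ hx.1
      obtain ⟨a, ⟨has, hva⟩, b, ⟨hbs, hb⟩, hab⟩ :=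
        hcut reached (hsub.ssubset_of_ne hne) ⟨hv, .rfl⟩
      exact hb ⟨hbs, hva.trans (Adj.reachable (induce_adj.2 hab))⟩
    refine (connected_iff_exists_forall_reachable _).2 ⟨⟨v, hv⟩, fun ⟨x, hx⟩ ↦ ?_⟩
    exact (hreached.symm.subset hx).2

lemma exists_adj_of_connected_induce (hs : (G.induce s).Connected) (hv : v ∈ s)
    (hne : (s \ {v}).Nonempty) : ∃ u ∈ s \ {v}, G.Adj v u := by
  have hssub : {v} ⊂ s := ⟨Set.singleton_subset_iff.2 hv, Set.sdiff_nonempty.1 hne⟩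
  simpa using (connected_induce_iff_forall_ssubset_exists_adj hv).1 hs {v} hssub rfl

lemma connected_induce_insert_of_forall_not_adj (hs : (G.induce s).Connected) (hv : v ∈ s)
    (hts : t ⊆ s) (hsep : ∀ a ∈ t, ∀ b ∈ s \ insert v t, ¬ G.Adj a b) :
    (G.induce (insert v t)).Connected := by
  rw [connected_induce_iff_forall_ssubset_exists_adj (Set.mem_insert v t)]
  intro r hr hvr
  have hssub : s \ insert v t ∪ r ⊂ s := by
    obtain ⟨x, hx, hxr⟩ := Set.exists_of_ssubset hr
    refine (Set.ssubset_iff_of_subset ?_).2 ⟨x, ?_, ?_⟩ <;> grind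
  obtain ⟨a, ha, b, hb, hab⟩ :=
    (connected_induce_iff_forall_ssubset_exists_adj hv).1 hs _ hssub (Or.inr hvr)
  have hbt : b ∈ t \ r := by grind
  have har : a ∈ r := ha.resolve_left fun ha ↦ hsep b hbt.1 a ha hab.symm
  exact ⟨a, har, b, ⟨Or.inr hbt.1, hbt.2⟩, hab⟩

lemma exists_connected_induce_insert_of_not_connected (hs : (G.induce s).Connected) (hv : v ∈ s)
    (hne : (s \ {v}).Nonempty) (hcut : ¬ (G.induce (s \ {v})).Connected) :
    ∃ t₁ t₂ : Set V, t₁.Nonempty ∧ t₂.Nonempty ∧ Disjoint t₁ t₂ ∧ t₁ ∪ t₂ = s \ {v} ∧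
      (G.induce (insert v t₁)).Connected ∧ (G.induce (insert v t₂)).Connected := by
  obtain ⟨w, hw⟩ := hne
  rw [connected_induce_iff_forall_ssubset_exists_adj hw] at hcut
  push Not at hcut
  obtain ⟨t, htsub, hwt, hsep⟩ := hcut
  refine ⟨t, (s \ {v}) \ t, ⟨w, hwt⟩, Set.nonempty_of_ssubset htsub, Set.disjoint_sdiff_right,
    Set.union_sdiff_cancel htsub.subset, ?_, ?_⟩
  · refine connected_induce_insert_of_forall_not_adj hs hv (htsub.subset.trans Set.sdiff_subset) ?_
    intro a ha b hb
    exact hsep a ha b (by grind)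
  · refine connected_induce_insert_of_forall_not_adj hs hv
      (Set.sdiff_subset.trans Set.sdiff_subset) ?_
    intro a ha b hb hab
    exact hsep b (by grind) a ha hab.symm

end InducedConnectivity

/-- Two vertex sets covering the graph, meeting exactly in `v` and both inducing connected
subgraphs: the decomposition into two connected graphs obtained by replicating `v`. When `G` has
cycles, further edges may join the two parts away from `v`. -/
structure IsOneVertexSplit {V : Type*} [Fintype V] [DecidableEq V] (G : SimpleGraph V)
    (S R : Finset V) (v : V) : Prop where
  union_eq : S ∪ R = Finset.univ
  inter_eq : S ∩ R = {v}
  connected_left : (G.induce (S : Set V)).Connected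
  connected_right : (G.induce (R : Set V)).Connected

namespace IsOneVertexSplit

variable {V : Type*} [Fintype V] [DecidableEq V] {G : SimpleGraph V} {S R X Y : Finset V} {u v : V}

lemma univ_singleton (hG : G.Connected) (v : V) : IsOneVertexSplit G Finset.univ {v} v where
  union_eq := by simp
  inter_eq := by simp
  connected_left := by
    rw [Finset.coe_univ]
    exact (induceUnivIso G).connected_iff.2 hG
  connected_right := by
    rw [Finset.coe_singleton]
    exact .of_subsingleton

lemma symm (h : IsOneVertexSplit G S R v) : IsOneVertexSplit G R S v where
  union_eq := by rw [Finset.union_comm, h.union_eq]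
  inter_eq := by rw [Finset.inter_comm, h.inter_eq]
  connected_left := h.connected_right
  connected_right := h.connected_left

lemma mem_left (h : IsOneVertexSplit G S R v) : v ∈ S :=
  Finset.mem_of_mem_inter_left (h.inter_eq ▸ Finset.mem_singleton_self v)

lemma card_add_card (h : IsOneVertexSplit G S R v) :
    S.card + R.card = Fintype.card V + 1 := by
  rw [← Finset.card_union_add_card_inter, h.union_eq, h.inter_eq, Finset.card_univ,
    Finset.card_singleton]

lemma move_cut_vertex (h : IsOneVertexSplit G S R v) (hu : u ∈ S) (hvu : G.Adj v u)
    (hS : (G.induce (S.erase v : Set V)).Connected) :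
    IsOneVertexSplit G (S.erase v) (insert u R) u where
  union_eq := by
    ext x
    grind [Finset.ext_iff.1 h.union_eq x, h.symm.mem_left]
  inter_eq := by
    ext x
    grind [Finset.ext_iff.1 h.inter_eq x, hvu.ne]
  connected_left := hS
  connected_right := by
    rw [Finset.insert_eq, Finset.coe_union, Finset.coe_singleton]
    exact connected_induce_union .of_subsingleton h.connected_right.preconnected
      (Set.mem_singleton u) h.symm.mem_left hvu.symm

lemma move_branch (h : IsOneVertexSplit G S R v) (hXY : Disjoint X Y) (hunion : X ∪ Y = S.erase v)
    (hX : (G.induce (insert v X : Set V)).Connected)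
    (hY : (G.induce (insert v Y : Set V)).Connected) :
    IsOneVertexSplit G (insert v Y) (R ∪ X) v where
  union_eq := by
    ext x
    grind [Finset.ext_iff.1 h.union_eq x, Finset.ext_iff.1 hunion x]
  inter_eq := by
    ext x
    grind [Finset.ext_iff.1 h.inter_eq x, Finset.ext_iff.1 hunion x, Finset.disjoint_left,
      h.symm.mem_left]
  connected_left := by rwa [Finset.coe_insert]
  connected_right := by
    have hvR : v ∈ (R : Set V) := h.symm.mem_left
    have hRX : ((R ∪ X : Finset V) : Set V) = ↑R ∪ insert v ↑X := by
      rw [Finset.coe_union, Set.union_insert, Set.insert_eq_of_mem (Set.mem_union_left _ hvR)]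
    rw [hRX]
    exact induce_union_connected h.connected_right.preconnected hX.preconnected
      ⟨v, hvR, Set.mem_insert v _⟩

lemma exists_move_branch (h : IsOneVertexSplit G S R v) (hne : (S.erase v).Nonempty)
    (hcut : ¬ (G.induce (S.erase v : Set V)).Connected) :
    ∃ X Y : Finset V, X.Nonempty ∧ X.card ≤ Y.card ∧ X.card + Y.card + 1 = S.card ∧
      IsOneVertexSplit G (insert v Y) (R ∪ X) v := by
  rw [← Finset.coe_nonempty] at hne
  rw [Finset.coe_erase] at hne hcut
  obtain ⟨X, Y, hXne, hYne, hXY, hunion, hX, hY⟩ :=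
    exists_connected_induce_insert_of_not_connected h.connected_left h.mem_left hne hcut
  lift X to Finset V using X.toFinite
  lift Y to Finset V using Y.toFinite
  rw [Finset.coe_nonempty] at hXne hYne
  replace hunion : X ∪ Y = S.erase v := mod_cast hunion
  rw [Finset.disjoint_coe] at hXY
  have hcard : X.card + Y.card + 1 = S.card := by
    rw [← Finset.card_union_of_disjoint hXY, hunion, Finset.card_erase_add_one h.mem_left]
  rcases le_total X.card Y.card with hle | hle
  · exact ⟨X, Y, hXne, hle, hcard, h.move_branch hXY hunion hX hY⟩
  · exact ⟨Y, X, hYne, hle, by rwa [Nat.add_comm Y.card],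
      h.move_branch hXY.symm (by rwa [Finset.union_comm]) hY hX⟩

lemma exists_max_card_lt (h : IsOneVertexSplit G S R v) (hRS : 2 * R.card < S.card) :
    ∃ S' R' v', IsOneVertexSplit G S' R' v' ∧ max S'.card R'.card < S.card := by
  have hR : 0 < R.card := Finset.card_pos.2 ⟨v, h.symm.mem_left⟩
  have hS : (S.erase v).card + 1 = S.card := Finset.card_erase_add_one h.mem_left
  have hne : (S.erase v).Nonempty := Finset.card_pos.1 (by lia)
  by_cases hconn : (G.induce (S.erase v : Set V)).Connected
  · obtain ⟨u, hu, hvu⟩ := exists_adj_of_connected_induce h.connected_left h.mem_left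
      (mod_cast hne)
    refine ⟨_, _, u, h.move_cut_vertex hu.1 hvu hconn, ?_⟩
    have := Finset.card_insert_le u R
    lia
  · obtain ⟨X, Y, hX, hXY, hcard, hsplit⟩ := h.exists_move_branch hne hconn
    refine ⟨_, _, v, hsplit, ?_⟩
    have := hX.card_pos
    have := Finset.card_insert_le v Y
    have := Finset.card_union_le R X
    lia

lemma exists_card_le_two_mul_card (hG : G.Connected) :
    ∃ S R v, IsOneVertexSplit G S R v ∧ R.card ≤ S.card ∧ S.card ≤ 2 * R.card := by
  obtain ⟨v₀⟩ := hG.nonempty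
  obtain ⟨⟨S, R, v⟩, h, hmin⟩ := exists_minimalFor_of_wellFoundedLT
    (fun p : Finset V × Finset V × V ↦ IsOneVertexSplit G p.1 p.2.1 p.2.2)
    (fun p ↦ max p.1.card p.2.1.card) ⟨(Finset.univ, {v₀}, v₀), univ_singleton hG v₀⟩
  have hbalanced {S' R' : Finset V} {v' : V} (h' : IsOneVertexSplit G S' R' v')
      (hmax : S'.card ≤ max S.card R.card) : S'.card ≤ 2 * R'.card := by
    by_contra! hlt
    obtain ⟨S'', R'', v'', h'', hlt'⟩ := h'.exists_max_card_lt hlt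
    exact (hmin (j := (S'', R'', v'')) h'' (hlt'.le.trans hmax)).not_gt (hlt'.trans_le hmax)
  rcases le_total R.card S.card with hle | hle
  · exact ⟨S, R, v, h, hle, hbalanced h (le_max_left _ _)⟩
  · exact ⟨R, S, v, h.symm, hle, hbalanced h.symm (le_max_right _ _)⟩

end IsOneVertexSplit

lemma le_natCeil_div_of_mul_lt {K : Type*} [Field K] [LinearOrder K] [IsStrictOrderedRing K]
    [FloorSemiring K] {a k m : ℕ} (hk : 0 < k) (h : k * a < m + k) :
    a ≤ ⌈(m / k : K)⌉₊ := by
  replace hk : (0 : K) < k := mod_cast hk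
  rw [← Nat.lt_add_one_iff, ← Nat.cast_lt (α := K)]
  calc (a : K) < m / k + 1 := by
        rw [div_add_one hk.ne', lt_div_iff₀' hk]
        exact_mod_cast h
    _ ≤ (⌈(m / k : K)⌉₊ + 1 : ℕ) := by
        push_cast
        gcongr
        exact Nat.le_ceil _

theorem stmt_12_general {V : Type*} [Fintype V] [DecidableEq V] (G : SimpleGraph V)
    (hG : G.Connected) :
    ∃ S₁ S₂ : Finset V,
      S₁ ∪ S₂ = Finset.univ ∧
      (S₁ ∩ S₂).card = 1 ∧
      (G.induce (S₁ : Set V)).Connected ∧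
      (G.induce (S₂ : Set V)).Connected ∧
      min S₁.card S₂.card ≤ ⌈(Fintype.card V : ℚ) / 2⌉₊ ∧
      max S₁.card S₂.card ≤ ⌈2 * (Fintype.card V : ℚ) / 3⌉₊ := by
  obtain ⟨S, R, v, h, hle, hbalanced⟩ := IsOneVertexSplit.exists_card_le_two_mul_card hG
  have hcard := h.card_add_card
  have hmin : 2 * min S.card R.card < Fintype.card V + 2 := by lia
  have hmax : 3 * max S.card R.card < 2 * Fintype.card V + 3 := by lia
  refine ⟨S, R, h.union_eq, ?_, h.connected_left, h.connected_right, ?_, ?_⟩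
  · rw [h.inter_eq, Finset.card_singleton]
  · exact mod_cast le_natCeil_div_of_mul_lt (K := ℚ) (by simp) hmin
  · exact mod_cast le_natCeil_div_of_mul_lt (K := ℚ) (by simp) hmax

theorem stmt_12 {V : Type*} [Fintype V] [DecidableEq V] (T : SimpleGraph V)
    (hT : T.IsTree) (hn : 2 ≤ Fintype.card V) :
    ∃ S₁ S₂ : Finset V,
      S₁ ∪ S₂ = Finset.univ ∧
      (S₁ ∩ S₂).card = 1 ∧
      (T.induce (S₁ : Set V)).Connected ∧
      (T.induce (S₂ : Set V)).Connected ∧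
      min S₁.card S₂.card ≤ ⌈(Fintype.card V : ℚ) / 2⌉₊ ∧
      max S₁.card S₂.card ≤ ⌈2 * (Fintype.card V : ℚ) / 3⌉₊ :=
  stmt_12_general T hT.connected
end

section
/- There exists a natural number B₀ such that the following holds for every B ≥ B₀: let T be a finite tree (connected acyclic simple graph) with at most 4B vertices, let U be a finite set (of targets), and let f : V(T) → Finset U assign to each vertex the set of targets it covers. Then there exists a subset S ⊆ V(T) with |S| ≤ B such that S induces a connected subgraph of T and |⋃_{v∈S} f v| ≥ (1/8) · |⋃_{v∈V(T)} f v|. -/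
/-!
A depth-first traversal of a connected graph on `n` vertices is a closed walk of length `2 * n - 2`
through all of them: it grows one vertex at a time, by a detour along an edge leaving the set of
vertices visited so far. Cutting this walk into `m` segments of `B` consecutive vertices covers the
graph by `m` connected sets as soon as `2 * n - 1 ≤ m * B`, and one of them carries at least `1 / m`
of the coverage. For `n ≤ 4 * B`, eight segments suffice.
-/

open Finset

section Traversal

variable {V : Type*} {G : SimpleGraph V}

theorem exists_walk_detour {u v x y : V} (p : G.Walk u v) (hx : x ∈ p.support) (hxy : G.Adj x y) :
    ∃ q : G.Walk u v, q.length = p.length + 2 ∧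
      ∀ z, z ∈ q.support ↔ z = y ∨ z ∈ p.support := by
  obtain ⟨toX, fromX, rfl⟩ := SimpleGraph.Walk.mem_support_iff_exists_append.mp hx
  refine ⟨toX.append (.cons hxy (.cons hxy.symm fromX)), ?_, fun z => ?_⟩
  · simp only [SimpleGraph.Walk.length_append, SimpleGraph.Walk.length_cons]
    omega
  · have hx_start : x ∈ fromX.support := fromX.start_mem_support
    simp only [SimpleGraph.Walk.mem_support_append_iff, SimpleGraph.Walk.support_cons,
      List.mem_cons]
    grind

theorem exists_adj_mem_notMem (hG : G.Preconnected) {s : Set V} {a b : V} (ha : a ∈ s)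
    (hb : b ∉ s) : ∃ x ∈ s, ∃ y ∉ s, G.Adj x y := by
  obtain ⟨p⟩ := hG a b
  obtain ⟨d, -, hfst, hsnd⟩ := p.exists_boundary_dart s ha hb
  exact ⟨d.fst, hfst, d.snd, hsnd, d.adj⟩

theorem exists_closed_walk_card_support [Fintype V] [DecidableEq V] (hG : G.Preconnected) (u : V)
    {k : ℕ} (hk : k < Fintype.card V) :
    ∃ p : G.Walk u u, p.length = 2 * k ∧ #p.support.toFinset = k + 1 := by
  induction k with
  | zero => exact ⟨.nil, by simp⟩
  | succ k ih =>
    obtain ⟨p, hlength, hcard⟩ := ih (by omega)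
    obtain ⟨b, hb⟩ : ∃ b, b ∉ p.support.toFinset := by
      by_contra! hall
      have := (card_eq_iff_eq_univ _).mpr (eq_univ_iff_forall.mpr hall)
      omega
    obtain ⟨x, hx, y, hy, hxy⟩ := exists_adj_mem_notMem hG (s := {z | z ∈ p.support})
      p.start_mem_support (mt List.mem_toFinset.mpr hb)
    obtain ⟨q, hq_length, hq_support⟩ := exists_walk_detour p hx hxy
    have hq_insert : q.support.toFinset = insert y p.support.toFinset := by
      ext z
      simp [hq_support]
    refine ⟨q, by omega, ?_⟩
    rw [hq_insert, card_insert_of_notMem (mt List.mem_toFinset.mp hy), hcard]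

theorem exists_closed_walk_forall_mem_support [Fintype V] (hG : G.Preconnected) (u : V) :
    ∃ p : G.Walk u u, p.length + 2 = 2 * Fintype.card V ∧ ∀ v, v ∈ p.support := by
  classical
  have hpos : 0 < Fintype.card V := Fintype.card_pos_iff.mpr ⟨u⟩
  obtain ⟨p, hlength, hcard⟩ :=
    exists_closed_walk_card_support hG u (Nat.sub_one_lt_of_lt hpos)
  have huniv : p.support.toFinset = univ := (card_eq_iff_eq_univ _).mp (by omega)
  exact ⟨p, by omega, fun v => List.mem_toFinset.mp (huniv ▸ mem_univ v)⟩

end Traversal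

section Segments

variable {V : Type*} [DecidableEq V] {G : SimpleGraph V} {u v : V}

/-- The set of vertices that the walk `p` visits in the `n` steps following time `start`, the vertex
at time `start` included; a walk that has ended stays at its last vertex. -/
def walkSegment (p : G.Walk u v) (start n : ℕ) : Finset V :=
  ((p.drop start).take n).support.toFinset

theorem card_walkSegment_le (p : G.Walk u v) (start n : ℕ) : #(walkSegment p start n) ≤ n + 1 := by
  refine (List.toFinset_card_le _).trans ?_
  rw [SimpleGraph.Walk.length_support, SimpleGraph.Walk.take_length]
  omega

theorem connected_induce_walkSegment (p : G.Walk u v) (start n : ℕ) :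
    (G.induce (walkSegment p start n : Set V)).Connected := by
  rw [walkSegment, List.coe_toFinset]
  exact ((p.drop start).take n).connected_induce_support

theorem getVert_mem_walkSegment (p : G.Walk u v) {start n j : ℕ} (hj : j ≤ n) :
    p.getVert (start + j) ∈ walkSegment p start n := by
  have hvert : ((p.drop start).take n).getVert j = p.getVert (start + j) := by
    rw [SimpleGraph.Walk.take_getVert, SimpleGraph.Walk.drop_getVert, min_eq_right hj]
  rw [walkSegment, List.mem_toFinset, ← hvert]
  exact SimpleGraph.Walk.getVert_mem_support _ _

theorem exists_mem_walkSegment_mul (p : G.Walk u v) {m n : ℕ} (hp : p.length < m * (n + 1)) {w : V}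
    (hw : w ∈ p.support) : ∃ i < m, w ∈ walkSegment p (i * (n + 1)) n := by
  obtain ⟨t, rfl, ht⟩ := SimpleGraph.Walk.mem_support_iff_exists_getVert.mp hw
  refine ⟨t / (n + 1), Nat.div_lt_of_lt_mul (by rw [mul_comm]; omega), ?_⟩
  have hmem := getVert_mem_walkSegment p (start := t / (n + 1) * (n + 1))
    (Nat.lt_succ_iff.mp (Nat.mod_lt t n.succ_pos))
  rwa [Nat.div_add_mod'] at hmem

end Segments

theorem exists_connected_cover {V : Type*} [Fintype V] {G : SimpleGraph V} (hG : G.Connected)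
    {m B : ℕ} (hcard : 2 * Fintype.card V ≤ m * B + 1) :
    ∃ P : Fin m → Finset V, (∀ i, #(P i) ≤ B ∧ (G.induce (P i : Set V)).Connected) ∧
      ∀ v, ∃ i, v ∈ P i := by
  classical
  obtain ⟨u⟩ := hG.nonempty
  obtain ⟨p, hlength, hp⟩ := exists_closed_walk_forall_mem_support hG.preconnected u
  have hlt : p.length < m * B := by omega
  obtain ⟨n, rfl⟩ : ∃ n, B = n + 1 :=
    Nat.exists_eq_succ_of_ne_zero (Nat.pos_of_lt_mul_left hlt).ne'
  refine ⟨fun i => walkSegment p (i * (n + 1)) n, fun i =>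
    ⟨card_walkSegment_le _ _ _, connected_induce_walkSegment _ _ _⟩, fun v => ?_⟩
  obtain ⟨i, hi, hv⟩ := exists_mem_walkSegment_mul p hlt (hp v)
  exact ⟨⟨i, hi⟩, hv⟩

theorem exists_card_biUnion_le_card_mul {ι α β : Type*} [Fintype ι] [Nonempty ι] [DecidableEq β]
    {s : Finset α} (P : ι → Finset α) (hP : ∀ a ∈ s, ∃ i, a ∈ P i) (f : α → Finset β) :
    ∃ i, #(s.biUnion f) ≤ Fintype.card ι * #((P i).biUnion f) := by
  obtain ⟨i, -, hi⟩ := exists_max_image univ (fun i => #((P i).biUnion f)) univ_nonempty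
  have hsub : s.biUnion f ⊆ univ.biUnion fun i => (P i).biUnion f := by
    intro b hb
    simp only [mem_biUnion, mem_univ, true_and] at hb ⊢
    obtain ⟨a, ha, hab⟩ := hb
    obtain ⟨j, hj⟩ := hP a ha
    exact ⟨j, a, hj, hab⟩
  exact ⟨i, (card_le_card hsub).trans (card_biUnion_le_card_mul _ _ _ hi)⟩

theorem stmt_14_general {V U : Type*} [Fintype V] [DecidableEq U] {G : SimpleGraph V}
    (hG : G.Connected) {m B : ℕ} (hcard : 2 * Fintype.card V ≤ m * B + 1) (f : V → Finset U) :
    ∃ S : Finset V, #S ≤ B ∧ (G.induce (S : Set V)).Connected ∧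
      #(univ.biUnion f) ≤ m * #(S.biUnion f) := by
  obtain ⟨P, hP, hcover⟩ := exists_connected_cover hG hcard
  have : Nonempty (Fin m) := hG.nonempty.elim fun v => (hcover v).nonempty
  obtain ⟨i, hi⟩ := exists_card_biUnion_le_card_mul P (fun v _ => hcover v) f
  rw [Fintype.card_fin] at hi
  exact ⟨P i, (hP i).1, (hP i).2, hi⟩

theorem stmt_14 :
    ∃ B₀ : ℕ, ∀ B : ℕ, B₀ ≤ B →
      ∀ (V U : Type) [Fintype V] [DecidableEq V] [DecidableEq U]
        (T : SimpleGraph V) (f : V → Finset U),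
        T.IsTree → Fintype.card V ≤ 4 * B →
        ∃ S : Finset V, S.card ≤ B ∧ (T.induce (S : Set V)).Connected ∧
          ((S.biUnion f).card : ℝ) ≥
            (1 / 8 : ℝ) * (((Finset.univ : Finset V).biUnion f).card : ℝ) := by
  refine ⟨0, fun B _ V U _ _ _ T f hT hcard => ?_⟩
  obtain ⟨S, hS, hconn, hcov⟩ := stmt_14_general hT.connected (m := 8) (B := B) (by omega) f
  have : (#(univ.biUnion f) : ℝ) ≤ 8 * #(S.biUnion f) := mod_cast hcov
  exact ⟨S, hS, hconn, by linarith⟩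
end
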